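/- arXiv:1312.7375 — 3 statements merged into one kernel-verified Lean document; each statement's English description precedes it below -/
import Mathlib

section
/- Let (γ_1,c_1),…,(γ_k,c_k) be pairwise distinct pairs of real numbers with γ_i > 0 for every i. Then the family of real-valued functions on ℝ consisting of the constant function 1, the identity function y ↦ y, the functions y ↦ G(y;γ_i,c_i) for i = 1,…,k, and the functions y ↦ y·G(y;γ_i,c_i) for i = 1,…,k, is linearly independent over ℝ (as elements of the vector space of functions ℝ → ℝ). -/
/-- The logistic transition function `G(y; γ, c) = 1/(1+e^{-γ(y-c)})`. -/
noncomputable def logisticG (γ c y : ℝ) : ℝ := 1 / (1 + Real.exp (-γ * (y - c)))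

/-! The logistic function continues to a meromorphic function on `ℂ` with a simple pole at
`c + iπ/γ`, and for a family of distinct `(|γᵢ|, cᵢ)` the pole of a member with the largest `|γᵢ|`
is not a pole of any other. If `∑ᵢ (pᵢ + qᵢ y) G(y; γᵢ, cᵢ)` agrees on `ℝ` with an entire function,
the two sides agree on `ℂ` by the identity theorem, so `pᵢ + qᵢ z` must vanish at that pole. The
pole is not real while `pᵢ` and `qᵢ` are, whence `pᵢ = qᵢ = 0`; induct on the number of terms. -/

open Filter Topology

section IdentityTheorem

variable {𝕜 E : Type*} [RCLike 𝕜] [NormedAddCommGroup E] [NormedSpace 𝕜 E]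

theorem eventuallyEq_nhdsNE_of_meromorphic_of_frequently_eq {f g : 𝕜 → E} (hf : Meromorphic f)
    (hg : Meromorphic g) {x : 𝕜} (h : ∃ᶠ w in 𝓝[≠] x, f w = g w) (z : 𝕜) :
    f =ᶠ[𝓝[≠] z] g := by
  have horder_x : meromorphicOrderAt (f - g) x = ⊤ :=
    meromorphicOrderAt_eq_top_iff.mpr <|
      ((hf x).frequently_eq_iff_eventuallyEq (hg x)).mp h |>.mono fun _ => sub_eq_zero_of_eq
  have horder_z : meromorphicOrderAt (f - g) z = ⊤ := by
    by_contra hz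
    exact (hf.sub hg).exists_meromorphicOrderAt_ne_top_iff_forall.mp ⟨z, hz⟩ x horder_x
  exact (meromorphicOrderAt_eq_top_iff.mp horder_z).mono fun _ => eq_of_sub_eq_zero

theorem eventuallyEq_nhdsNE_of_meromorphic_of_eq_ofReal [NormedSpace ℂ E] {f g : ℂ → E}
    (hf : Meromorphic f) (hg : Meromorphic g) (h : ∀ y : ℝ, f y = g y) (z : ℂ) :
    f =ᶠ[𝓝[≠] z] g := by
  have hreal : Tendsto ((↑) : ℝ → ℂ) (𝓝[≠] 0) (𝓝[≠] ((0 : ℝ) : ℂ)) :=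
    Complex.continuous_ofReal.continuousWithinAt.tendsto_nhdsWithin fun _ =>
      Complex.ofReal_injective.ne
  exact eventuallyEq_nhdsNE_of_meromorphic_of_frequently_eq hf hg
    (hreal.frequently (Frequently.of_forall h)) z

end IdentityTheorem

theorem meromorphic_of_differentiable {E : Type*} [NormedAddCommGroup E] [NormedSpace ℂ E]
    [CompleteSpace E] {f : ℂ → E} (hf : Differentiable ℂ f) : Meromorphic f := fun z =>
  (hf.analyticAt z).meromorphicAt

theorem eq_zero_of_mul_eventuallyEq_of_simple_pole {𝕜 : Type*} [NontriviallyNormedField 𝕜]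
    {N L R : 𝕜 → 𝕜} {z r : 𝕜} (hN : ContinuousAt N z) (hR : ContinuousAt R z)
    (hL : Tendsto (fun w => (w - z) * L w) (𝓝[≠] z) (𝓝 r)) (hr : r ≠ 0)
    (h : (fun w => N w * L w) =ᶠ[𝓝[≠] z] R) : N z = 0 := by
  have hleft : Tendsto (fun w => N w * ((w - z) * L w)) (𝓝[≠] z) (𝓝 (N z * r)) :=
    (hN.mono_left nhdsWithin_le_nhds).mul hL
  have hright : Tendsto (fun w => (w - z) * R w) (𝓝[≠] z) (𝓝 0) := by
    have hcont : ContinuousAt (fun w => (w - z) * R w) z := by fun_prop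
    simpa using hcont.tendsto.mono_left nhdsWithin_le_nhds
  have heq : (fun w => N w * ((w - z) * L w)) =ᶠ[𝓝[≠] z] fun w => (w - z) * R w :=
    h.mono fun w hw => by simp only [← hw]; ring
  exact (mul_eq_zero.mp (tendsto_nhds_unique (hleft.congr' heq) hright)).resolve_right hr

theorem eq_zero_of_ofReal_add_ofReal_mul_eq_zero {p q : ℝ} {z : ℂ} (hz : z.im ≠ 0)
    (h : (p : ℂ) + q * z = 0) : p = 0 ∧ q = 0 := by
  have hq : q = 0 := by simpa [hz] using congrArg Complex.im h
  exact ⟨by simpa [hq] using h, hq⟩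

/-- The meromorphic continuation of `logisticG γ c` to the complex plane (with value `0` at the
poles, by the convention `1 / 0 = 0`). -/
noncomputable def complexLogistic (γ c : ℝ) (z : ℂ) : ℂ := 1 / (1 + Complex.exp (-γ * (z - c)))

/-- The pole `c + iπ/γ` of `complexLogistic γ c`, one of the two closest to the real axis. -/
noncomputable def logisticPole (γ c : ℝ) : ℂ := ⟨c, Real.pi / γ⟩

section ComplexLogistic

variable {γ c γ' c' : ℝ}

theorem complexLogistic_ofReal (γ c y : ℝ) : complexLogistic γ c y = logisticG γ c y := by
  simp [complexLogistic, logisticG]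

theorem meromorphic_complexLogistic (γ c : ℝ) : Meromorphic (complexLogistic γ c) := by
  have hden : Differentiable ℂ fun z : ℂ => 1 + Complex.exp (-γ * (z - c)) := by fun_prop
  exact (Meromorphic.const 1).fun_div (meromorphic_of_differentiable hden)

theorem exp_logisticPole (hγ : γ ≠ 0) :
    Complex.exp (-γ * (logisticPole γ c - c)) = -1 := by
  have harg : -(γ : ℂ) * (logisticPole γ c - c) = -(Real.pi * Complex.I) := by
    apply Complex.ext <;> simp [logisticPole, mul_div_cancel₀ _ hγ]
  rw [harg, Complex.exp_neg, Complex.exp_pi_mul_I, inv_neg, inv_one]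

theorem tendsto_sub_logisticPole_mul_complexLogistic (hγ : γ ≠ 0) :
    Tendsto (fun w => (w - logisticPole γ c) * complexLogistic γ c w) (𝓝[≠] (logisticPole γ c))
      (𝓝 (γ : ℂ)⁻¹) := by
  set z := logisticPole γ c
  have hexp : Complex.exp (-γ * (z - c)) = -1 := exp_logisticPole hγ
  have hderiv : HasDerivAt (fun w : ℂ => 1 + Complex.exp (-γ * (w - c))) γ z := by
    refine (((hasDerivAt_id z).sub_const (c : ℂ)).const_mul (-γ : ℂ)).cexp.const_add 1
      |>.congr_deriv ?_
    rw [id, hexp]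
    ring
  refine (hderiv.tendsto_slope.inv₀ (Complex.ofReal_ne_zero.mpr hγ)).congr fun w => ?_
  rw [slope_def_field, hexp, add_neg_cancel, sub_zero, inv_div, complexLogistic, mul_one_div]

theorem exp_logisticPole_ne_neg_one (hle : |γ'| ≤ |γ|) (hne : (|γ'|, c') ≠ (|γ|, c)) :
    Complex.exp (-γ' * (logisticPole γ c - c')) ≠ -1 := by
  intro hexp
  have hre : (-γ' * (logisticPole γ c - c')).re = -γ' * (c - c') := by simp [logisticPole]
  have him : (-γ' * (logisticPole γ c - c')).im = -(γ' / γ * Real.pi) := by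
    simp [logisticPole, div_mul_eq_mul_div, mul_div_assoc]
  have hnorm : Real.exp (-γ' * (c - c')) = 1 := by
    simpa only [Complex.norm_exp, hre, norm_neg, norm_one] using congrArg norm hexp
  have hcos : Real.cos (|γ' / γ| * Real.pi) = Real.cos Real.pi := by
    have h := congrArg Complex.re hexp
    rw [Complex.exp_re, hre, him, hnorm, one_mul, Real.cos_neg, ← Real.cos_abs, abs_mul,
      abs_of_pos Real.pi_pos] at h
    rw [h, Real.cos_pi, Complex.neg_re, Complex.one_re]
  have hratio_le : |γ' / γ| ≤ 1 := by
    rw [abs_div]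
    exact div_le_one_of_le₀ hle (abs_nonneg γ)
  have hratio : |γ' / γ| = 1 := by
    have hpi := Real.injOn_cos ⟨by positivity, mul_le_of_le_one_left Real.pi_pos.le hratio_le⟩
      ⟨Real.pi_pos.le, le_rfl⟩ hcos
    exact (mul_eq_right₀ Real.pi_ne_zero).mp hpi
  have hγ' : γ' ≠ 0 := by
    rintro rfl
    simp at hratio
  have habs : |γ'| = |γ| := eq_of_div_eq_one (by rwa [← abs_div])
  have hc : c' = c := by
    have h : -γ' * (c - c') = 0 := Real.exp_eq_one_iff _ |>.mp hnorm
    exact (sub_eq_zero.mp ((mul_eq_zero.mp h).resolve_left (neg_ne_zero.mpr hγ'))).symm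
  exact hne (by rw [habs, hc])

theorem continuousAt_complexLogistic_logisticPole (hle : |γ'| ≤ |γ|)
    (hne : (|γ'|, c') ≠ (|γ|, c)) :
    ContinuousAt (complexLogistic γ' c') (logisticPole γ c) := by
  have hden : 1 + Complex.exp (-γ' * (logisticPole γ c - c')) ≠ 0 := fun h =>
    exp_logisticPole_ne_neg_one hle hne (eq_neg_of_add_eq_zero_right h)
  exact continuousAt_const.div (by fun_prop) hden

theorem apply_logisticPole_eq_zero (hγ : γ ≠ 0) {N R : ℂ → ℂ} (hN : Differentiable ℂ N)
    (hR : Meromorphic R) (hRc : ContinuousAt R (logisticPole γ c))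
    (h : ∀ y : ℝ, N y * logisticG γ c y = R y) : N (logisticPole γ c) = 0 := by
  have hNL : Meromorphic fun z => N z * complexLogistic γ c z :=
    (meromorphic_of_differentiable hN).fun_mul (meromorphic_complexLogistic γ c)
  exact eq_zero_of_mul_eventuallyEq_of_simple_pole hN.continuous.continuousAt hRc
    (tendsto_sub_logisticPole_mul_complexLogistic hγ) (inv_ne_zero (Complex.ofReal_ne_zero.mpr hγ))
    (eventuallyEq_nhdsNE_of_meromorphic_of_eq_ofReal hNL hR
      (fun y => by rw [complexLogistic_ofReal, h]) _)

end ComplexLogistic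

/-- The space of real functions that are restrictions of entire functions; the logistic functions
are shown to be independent modulo this space. -/
def entireRestrictions : Submodule ℝ (ℝ → ℝ) where
  carrier := {f | ∃ F : ℂ → ℂ, Differentiable ℂ F ∧ ∀ y : ℝ, F y = f y}
  add_mem' := by
    rintro f g ⟨F, hF, hFf⟩ ⟨G, hG, hGg⟩
    exact ⟨F + G, hF.add hG, fun y => by simp [hFf, hGg]⟩
  zero_mem' := ⟨0, differentiable_const 0, fun _ => Complex.ofReal_zero.symm⟩
  smul_mem' := by
    rintro a f ⟨F, hF, hFf⟩
    exact ⟨fun z => a * F z, hF.const_mul _, fun y => by simp [hFf]⟩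

theorem eq_zero_of_sum_logisticG_mem_entireRestrictions {ι : Type*} {γ c : ι → ℝ}
    (hγ : ∀ i, γ i ≠ 0) (hinj : Function.Injective fun i => (|γ i|, c i)) (S : Finset ι)
    (p q : ι → ℝ)
    (h : ∑ i ∈ S, (p i • (fun y => logisticG (γ i) (c i) y) +
      q i • fun y => y * logisticG (γ i) (c i) y) ∈ entireRestrictions) :
    ∀ i ∈ S, p i = 0 ∧ q i = 0 := by
  classical
  induction S using Finset.induction_on_max_value fun i => |γ i| with
  | empty => simp
  | insert i S hi hmax ih =>
    obtain ⟨F, hF, hFsum⟩ := h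
    have hpole : (p i : ℂ) + q i * logisticPole (γ i) (c i) = 0 := by
      refine apply_logisticPole_eq_zero (hγ i) (N := fun z => p i + q i * z)
        (R := fun z => F z - ∑ j ∈ S, (p j + q j * z) * complexLogistic (γ j) (c j) z)
        (by fun_prop) ?_ ?_ fun y => ?_
      · exact (meromorphic_of_differentiable hF).fun_sub <| .fun_sum fun j _ =>
          (meromorphic_of_differentiable (by fun_prop)).fun_mul (meromorphic_complexLogistic _ _)
      · refine hF.continuous.continuousAt.sub <| tendsto_finsetSum S fun j hj => ?_
        have hne : (|γ j|, c j) ≠ (|γ i|, c i) := hinj.ne (ne_of_mem_of_not_mem hj hi)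
        have hL : ContinuousAt (complexLogistic (γ j) (c j)) (logisticPole (γ i) (c i)) :=
          continuousAt_complexLogistic_logisticPole (hmax j hj) hne
        exact ContinuousAt.mul (by fun_prop) hL
      · rw [eq_sub_iff_add_eq, hFsum, Finset.sum_insert hi]
        simp [complexLogistic_ofReal, add_mul, mul_assoc]
    have him : (logisticPole (γ i) (c i)).im ≠ 0 := div_ne_zero Real.pi_ne_zero (hγ i)
    have hpq : p i = 0 ∧ q i = 0 := eq_zero_of_ofReal_add_ofReal_mul_eq_zero him hpole
    have hS : ∀ j ∈ S, p j = 0 ∧ q j = 0 := ih ⟨F, hF, by simpa [hi, hpq] using hFsum⟩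
    exact Finset.forall_mem_insert _ _ _ |>.mpr ⟨hpq, hS⟩

theorem linearIndependent_sumElim_of_forall_finset {R M ι : Type*} [Ring R] [AddCommGroup M]
    [Module R M] {v w : ι → M}
    (h : ∀ (S : Finset ι) (p q : ι → R), ∑ i ∈ S, (p i • v i + q i • w i) = 0 →
      ∀ i ∈ S, p i = 0 ∧ q i = 0) :
    LinearIndependent R (Sum.elim v w) := by
  classical
  rw [linearIndependent_iff'']
  intro s g hg hsum
  let T := s.toLeft ∪ s.toRight
  have hs : s ⊆ T.disjSum T := by
    rintro (i | i) hi <;> simp [T, hi]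
  have hT : ∀ i ∈ T, g (.inl i) = 0 ∧ g (.inr i) = 0 := by
    refine h T (g ∘ .inl) (g ∘ .inr) ?_
    rw [Finset.sum_subset hs fun i _ hi => by rw [hg i hi, zero_smul]] at hsum
    simpa [Finset.sum_add_distrib] using hsum
  intro x
  by_cases hx : x ∈ s
  · rcases x with i | i
    · exact (hT i (by simp [T, hx])).1
    · exact (hT i (by simp [T, hx])).2
  · exact hg x hx

theorem linearIndependent_mk_logisticG {ι : Type*} {γ c : ι → ℝ} (hγ : ∀ i, γ i ≠ 0)
    (hinj : Function.Injective fun i => (|γ i|, c i)) :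
    LinearIndependent ℝ (Submodule.Quotient.mk (p := entireRestrictions) ∘
      Sum.elim (fun i y => logisticG (γ i) (c i) y) fun i y => y * logisticG (γ i) (c i) y) := by
  rw [Sum.comp_elim]
  refine linearIndependent_sumElim_of_forall_finset fun S p q h => ?_
  refine eq_zero_of_sum_logisticG_mem_entireRestrictions hγ hinj S p q ?_
  rw [← Submodule.Quotient.mk_eq_zero, ← Submodule.mkQ_apply, map_sum]
  simpa using h

/-- The rates enter through `|γ|` because `G(y; -γ, c) = 1 - G(y; γ, c)`. -/
theorem linearIndependent_logistic_family_general {κ ι : Type*} {u : κ → ℝ → ℝ}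
    (hu : LinearIndependent ℝ u) (hu_entire : ∀ k, u k ∈ entireRestrictions) {γ c : ι → ℝ}
    (hγ : ∀ i, γ i ≠ 0) (hinj : Function.Injective fun i => (|γ i|, c i)) :
    LinearIndependent ℝ (Sum.elim u
      (Sum.elim (fun i y => logisticG (γ i) (c i) y) fun i y => y * logisticG (γ i) (c i) y)) :=
  have hu' : LinearIndependent ℝ fun k => (⟨u k, hu_entire k⟩ : entireRestrictions) :=
    .of_comp entireRestrictions.subtype hu
  hu'.sumElim_of_quotient _ (linearIndependent_mk_logisticG hγ hinj)

theorem linearIndependent_one_id :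
    LinearIndependent ℝ (Sum.elim (fun _ : Unit => fun _ : ℝ => (1 : ℝ))
      (fun _ : Unit => fun y : ℝ => y)) := by
  refine linearIndependent_sumElim_of_forall_finset fun S p q h i hi => ?_
  have hS : S = {i} := Finset.eq_singleton_iff_unique_mem.mpr ⟨hi, fun _ _ => rfl⟩
  have h_eval : ∀ y : ℝ, p i + q i * y = 0 := fun y => by simpa [hS] using congrFun h y
  have hp : p i = 0 := by simpa using h_eval 0
  exact ⟨hp, by simpa [hp] using h_eval 1⟩

theorem one_id_mem_entireRestrictions (k : Unit ⊕ Unit) :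
    Sum.elim (fun _ : Unit => fun _ : ℝ => (1 : ℝ)) (fun _ : Unit => fun y : ℝ => y) k ∈
      entireRestrictions := by
  rcases k with _ | _
  · exact ⟨fun _ => 1, differentiable_const 1, fun _ => Complex.ofReal_one.symm⟩
  · exact ⟨id, differentiable_id, fun _ => rfl⟩

/-- The family consisting of the constant function 1, the identity, the logistic functions
`y ↦ G(y; γᵢ, cᵢ)` and the functions `y ↦ y · G(y; γᵢ, cᵢ)`, for pairwise distinct pairs
`(γᵢ, cᵢ)` with `γᵢ > 0`, is linearly independent in the real vector space of functions
`ℝ → ℝ`. -/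
theorem linearIndependent_logistic_family
    (k : ℕ) (γ c : Fin k → ℝ) (hγ : ∀ i, 0 < γ i)
    (hdist : ∀ i j : Fin k, i ≠ j → (γ i, c i) ≠ (γ j, c j)) :
    LinearIndependent ℝ
      (Sum.elim
        (Sum.elim (fun _ : Unit => fun _ : ℝ => (1 : ℝ))
                  (fun _ : Unit => fun y : ℝ => y))
        (Sum.elim (fun i : Fin k => fun y : ℝ => logisticG (γ i) (c i) y)
                  (fun i : Fin k => fun y : ℝ => y * logisticG (γ i) (c i) y))) := by
  refine linearIndependent_logistic_family_general linearIndependent_one_id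
    one_id_mem_entireRestrictions (fun i => (hγ i).ne') fun i j hij => ?_
  exact not_imp_not.mp (hdist i j) (by simpa only [abs_of_pos (hγ _)] using hij)
end

section
/- Let γ > 0 and c ∈ ℝ. For every s with 0 < s < γ, one has ∫_{−∞}^{∞} e^{−s y} · y · (1/(1+e^{−γ(y−c)})) dy = (π c/γ) · e^{−c s} / sin(π s/γ) + (π²/γ²) · e^{−c s} · cos(π s/γ) / sin²(π s/γ). -/
open MeasureTheory Real

open scoped Topology

/-! The substitution `x = sigmoid y` turns Euler's Beta integral into the Laplace transform of the
sigmoid, which equals `Γ(1 - s) Γ(s) = π / sin (π s)` on the strip `0 < re s < 1`. Rescaling and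
translating gives the transform of the logistic function, and multiplication by `y` corresponds to
`-d/ds`, by differentiation under the integral sign. -/

lemma abs_mul_exp_neg_mul_le {a b ε : ℝ} (hε : 0 < ε) (hab : |a - b| ≤ ε) (x : ℝ) :
    |x| * exp (-a * x) ≤ ε⁻¹ * (exp (-(b - 2 * ε) * x) + exp (-(b + 2 * ε) * x)) := by
  have h_linear : |x| ≤ ε⁻¹ * exp (ε * |x|) := by
    rw [le_inv_mul_iff₀ hε]
    exact (le_add_of_nonneg_right zero_le_one).trans (add_one_le_exp _)
  have h_exponent : -a * x ≤ -b * x + ε * |x| := by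
    have : -((a - b) * x) ≤ |a - b| * |x| := abs_mul (a - b) x ▸ neg_le_abs _
    linarith [mul_le_mul_of_nonneg_right hab (abs_nonneg x)]
  calc |x| * exp (-a * x)
      ≤ ε⁻¹ * exp (ε * |x|) * exp (-b * x + ε * |x|) := by gcongr
    _ = ε⁻¹ * (exp (-b * x) * exp |2 * ε * x|) := by
      rw [mul_assoc, ← exp_add, ← exp_add, abs_mul, abs_of_pos (by positivity : 0 < 2 * ε)]
      ring_nf
    _ ≤ ε⁻¹ * (exp (-b * x) * (exp (2 * ε * x) + exp (-(2 * ε * x)))) := by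
      gcongr
      exact exp_abs_le _
    _ = ε⁻¹ * (exp (-(b - 2 * ε) * x) + exp (-(b + 2 * ε) * x)) := by
      rw [mul_add, ← exp_add, ← exp_add]
      ring_nf

section Laplace

variable {E : Type*} [NormedAddCommGroup E] [NormedSpace ℂ E]

lemma norm_neg_smul_cexp_smul_le {s : ℂ} {ε : ℝ} (hε : 0 < ε) {w : ℂ} (hw : w ∈ Metric.ball s ε)
    (y : ℝ) (v : E) :
    ‖(-y : ℂ) • Complex.exp (-w * y) • v‖ ≤
      ε⁻¹ * (‖Complex.exp (-(s - (2 * ε : ℝ)) * y) • v‖ +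
        ‖Complex.exp (-(s + (2 * ε : ℝ)) * y) • v‖) := by
  have h_re : |w.re - s.re| ≤ ε := by
    rw [← Complex.sub_re]
    exact (Complex.abs_re_le_norm _).trans (mem_ball_iff_norm.1 hw).le
  have h_norm_exp (z : ℂ) : ‖Complex.exp (-z * y)‖ = exp (-z.re * y) := by
    simp [Complex.norm_exp]
  simp only [norm_smul, h_norm_exp, norm_neg, Complex.norm_real, norm_eq_abs, Complex.sub_re,
    Complex.add_re, Complex.ofReal_re]
  rw [← mul_assoc, ← add_mul, ← mul_assoc]
  exact mul_le_mul_of_nonneg_right (abs_mul_exp_neg_mul_le hε h_re y) (norm_nonneg v)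

/-- `f` has absolutely convergent two-sided Laplace transform with value `L` at `s`. Convergence is
part of the notion, since a divergent Bochner integral has the junk value `0`. -/
def HasBilateralLaplace (f : ℝ → E) (s : ℂ) (L : E) : Prop :=
  Integrable (fun y : ℝ ↦ Complex.exp (-s * y) • f y) ∧
    ∫ y : ℝ, Complex.exp (-s * y) • f y = L

namespace HasBilateralLaplace

variable {f : ℝ → E} {s : ℂ} {L : E}

lemma comp_mul_left {a : ℝ} (ha : a ≠ 0) (hf : HasBilateralLaplace f (s / a) L) :
    HasBilateralLaplace (fun y ↦ f (a * y)) s (|a⁻¹| • L) := by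
  have h_exp (y : ℝ) : Complex.exp (-s * y) = Complex.exp (-(s / a) * (a * y : ℝ)) := by
    rw [Complex.ofReal_mul, ← mul_assoc, ← neg_div, div_mul_cancel₀ _ (Complex.ofReal_ne_zero.2 ha)]
  simp only [HasBilateralLaplace, h_exp]
  exact ⟨hf.1.comp_mul_left' ha, by rw [← hf.2, ← Measure.integral_comp_mul_left]⟩

lemma comp_sub_right (hf : HasBilateralLaplace f s L) (c : ℝ) :
    HasBilateralLaplace (fun y ↦ f (y - c)) s (Complex.exp (-c * s) • L) := by
  have h_exp (y : ℝ) :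
      Complex.exp (-s * y) = Complex.exp (-c * s) * Complex.exp (-s * (y - c : ℝ)) := by
    rw [← Complex.exp_add]
    push_cast
    ring_nf
  have h_smul : (fun y : ℝ ↦ Complex.exp (-s * y) • f (y - c)) =
      fun y ↦ Complex.exp (-c * s) • Complex.exp (-s * (y - c : ℝ)) • f (y - c) :=
    funext fun y ↦ by rw [h_exp, mul_smul]
  rw [HasBilateralLaplace, h_smul]
  refine ⟨(hf.1.comp_sub_right c).smul _, ?_⟩
  rw [integral_smul, integral_sub_right_eq_self (fun y : ℝ ↦ Complex.exp (-s * y) • f y), hf.2]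

theorem id_smul {L : ℂ → E} {L' : E} (hf : ∀ᶠ w in 𝓝 s, HasBilateralLaplace f w (L w))
    (hL : HasDerivAt L L' s) : HasBilateralLaplace (fun y ↦ y • f y) s (-L') := by
  obtain ⟨δ, hδ, hball⟩ := Metric.eventually_nhds_iff_ball.1 hf
  obtain ⟨ε, hε, hεδ⟩ : ∃ ε : ℝ, 0 < ε ∧ 2 * ε < δ := ⟨δ / 3, by positivity, by linarith⟩
  have h_left : s - (2 * ε : ℝ) ∈ Metric.ball s δ := by
    simpa [abs_of_pos hε] using hεδ
  have h_right : s + (2 * ε : ℝ) ∈ Metric.ball s δ := by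
    simpa [abs_of_pos hε] using hεδ
  have h_hasDerivAt (y : ℝ) (w : ℂ) : HasDerivAt (fun z ↦ Complex.exp (-z * y) • f y)
      ((-y : ℂ) • Complex.exp (-w * y) • f y) w := by
    rw [smul_smul]
    convert (((hasDerivAt_neg w).mul_const (y : ℂ)).cexp).smul_const (f y) using 2
    ring
  obtain ⟨h_int, h_deriv⟩ := hasDerivAt_integral_of_dominated_loc_of_deriv_le
    (Metric.ball_mem_nhds s hε) (hf.mono fun w hw ↦ hw.1.aestronglyMeasurable) hf.self_of_nhds.1
    ((Complex.continuous_ofReal.neg.aestronglyMeasurable).smul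
      hf.self_of_nhds.1.aestronglyMeasurable)
    (ae_of_all _ fun y w hw ↦ norm_neg_smul_cexp_smul_le hε hw y (f y))
    (((hball _ h_left).1.norm.add (hball _ h_right).1.norm).const_mul ε⁻¹)
    (ae_of_all _ fun y w _ ↦ h_hasDerivAt y w)
  have h_eq (y : ℝ) : Complex.exp (-s * y) • y • f y =
      -((-y : ℂ) • Complex.exp (-s * y) • f y) := by
    rw [neg_smul, neg_neg, smul_comm, Complex.coe_smul]
  simp only [HasBilateralLaplace, h_eq]
  refine ⟨h_int.neg, ?_⟩
  rw [integral_neg, h_deriv.unique (hL.congr_of_eventuallyEq (hf.mono fun w hw ↦ hw.2))]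

end HasBilateralLaplace

end Laplace

lemma abs_deriv_sigmoid_smul_cpow (u v : ℂ) (y : ℝ) :
    |sigmoid y * (1 - sigmoid y)| •
        ((sigmoid y : ℂ) ^ (u - 1) * (1 - (sigmoid y : ℂ)) ^ (v - 1)) =
      (sigmoid y : ℂ) ^ u * (sigmoid (-y) : ℂ) ^ v := by
  have h_pos := sigmoid_pos y
  have h_neg_pos := sigmoid_pos (-y)
  have h_ne : (sigmoid y : ℂ) ≠ 0 := Complex.ofReal_ne_zero.2 h_pos.ne'
  have h_neg_ne : (sigmoid (-y) : ℂ) ≠ 0 := Complex.ofReal_ne_zero.2 h_neg_pos.ne'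
  have h_one_sub : 1 - (sigmoid y : ℂ) = (sigmoid (-y) : ℂ) := by
    rw [sigmoid_neg, Complex.ofReal_sub, Complex.ofReal_one]
  rw [h_one_sub, ← sigmoid_neg, abs_of_pos (mul_pos h_pos h_neg_pos), Complex.real_smul,
    Complex.ofReal_mul, Complex.cpow_sub _ _ h_ne, Complex.cpow_sub _ _ h_neg_ne,
    Complex.cpow_one, Complex.cpow_one]
  field_simp

lemma integrable_sigmoid_cpow_mul_sigmoid_neg_cpow {u v : ℂ} (hu : 0 < u.re) (hv : 0 < v.re) :
    Integrable (fun y : ℝ ↦ (sigmoid y : ℂ) ^ u * (sigmoid (-y) : ℂ) ^ v) := by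
  have h_beta := Complex.betaIntegral_convergent hu hv
  rw [intervalIntegrable_iff_integrableOn_Ioo_of_le zero_le_one, ← range_sigmoid,
    ← Set.image_univ, integrableOn_image_iff_integrableOn_abs_deriv_smul MeasurableSet.univ
      (fun y _ ↦ (hasDerivAt_sigmoid y).hasDerivWithinAt) sigmoid_injective.injOn] at h_beta
  simpa only [abs_deriv_sigmoid_smul_cpow, integrableOn_univ] using h_beta

lemma integral_sigmoid_cpow_mul_sigmoid_neg_cpow (u v : ℂ) :
    ∫ y : ℝ, (sigmoid y : ℂ) ^ u * (sigmoid (-y) : ℂ) ^ v = Complex.betaIntegral u v := by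
  rw [Complex.betaIntegral, intervalIntegral.integral_of_le zero_le_one,
    integral_Ioc_eq_integral_Ioo, ← range_sigmoid, ← Set.image_univ,
    integral_image_eq_integral_abs_deriv_smul MeasurableSet.univ
      (fun y _ ↦ (hasDerivAt_sigmoid y).hasDerivWithinAt) sigmoid_injective.injOn]
  simp only [abs_deriv_sigmoid_smul_cpow, Measure.restrict_univ]

lemma sigmoid_cpow_one_sub_mul_sigmoid_neg_cpow (s : ℂ) (y : ℝ) :
    (sigmoid y : ℂ) ^ (1 - s) * (sigmoid (-y) : ℂ) ^ s =
      Complex.exp (-s * y) * (sigmoid y : ℂ) := by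
  have h_ne : (sigmoid y : ℂ) ≠ 0 := Complex.ofReal_ne_zero.2 (sigmoid_pos y).ne'
  rw [← sigmoid_mul_rexp_neg, Complex.ofReal_mul,
    Complex.mul_cpow_ofReal_nonneg (sigmoid_nonneg y) (exp_pos _).le,
    Complex.ofReal_exp, ← mul_assoc, ← Complex.cpow_add _ _ h_ne, sub_add_cancel, Complex.cpow_one,
    Complex.cpow_def_of_ne_zero (Complex.exp_ne_zero _), ← Complex.ofReal_exp,
    ← Complex.ofReal_log (exp_pos _).le, log_exp, mul_comm]
  push_cast
  ring_nf

theorem hasBilateralLaplace_sigmoid {s : ℂ} (hs : s.re ∈ Set.Ioo 0 1) :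
    HasBilateralLaplace (fun y ↦ (sigmoid y : ℂ)) s (π / Complex.sin (π * s)) := by
  have h_one_sub : 0 < (1 - s).re := by simpa using hs.2
  simp only [HasBilateralLaplace, smul_eq_mul, ← sigmoid_cpow_one_sub_mul_sigmoid_neg_cpow]
  refine ⟨integrable_sigmoid_cpow_mul_sigmoid_neg_cpow h_one_sub hs.1, ?_⟩
  rw [integral_sigmoid_cpow_mul_sigmoid_neg_cpow,
    Complex.betaIntegral_eq_Gamma_mul_div _ _ h_one_sub hs.1, sub_add_cancel, Complex.Gamma_one,
    div_one, mul_comm, Complex.Gamma_mul_Gamma_one_sub]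

lemma mem_integerComplement_of_re_mem_Ioo {z : ℂ} (hz : z.re ∈ Set.Ioo 0 1) :
    z ∈ Complex.integerComplement := by
  rintro ⟨n, rfl⟩
  rw [Complex.intCast_re] at hz
  have h_pos : 0 < n := by exact_mod_cast hz.1
  have h_lt_one : n < 1 := by exact_mod_cast hz.2
  lia

section Logistic

variable {γ : ℝ} (c : ℝ) {s : ℂ}

lemma div_re_mem_Ioo (hγ : 0 < γ) (hs : 0 < s.re) (hsγ : s.re < γ) :
    (s / γ).re ∈ Set.Ioo 0 1 := by
  rw [Complex.div_ofReal_re]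
  exact ⟨div_pos hs hγ, (div_lt_one hγ).2 hsγ⟩

theorem hasBilateralLaplace_logistic (hγ : 0 < γ) (hs : 0 < s.re) (hsγ : s.re < γ) :
    HasBilateralLaplace (fun y ↦ (sigmoid (γ * (y - c)) : ℂ)) s
      (π / γ * Complex.exp (-c * s) / Complex.sin (π * s / γ)) := by
  convert ((hasBilateralLaplace_sigmoid (div_re_mem_Ioo hγ hs hsγ)).comp_mul_left
    hγ.ne').comp_sub_right c using 1
  rw [abs_of_pos (inv_pos.2 hγ), Complex.real_smul, smul_eq_mul, Complex.ofReal_inv,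
    mul_div_assoc (π : ℂ) s γ]
  ring

lemma hasDerivAt_exp_div_sin (hsin : Complex.sin (π * s / γ) ≠ 0) :
    HasDerivAt (fun w : ℂ ↦ π / γ * Complex.exp (-c * w) / Complex.sin (π * w / γ))
      (-(π * c / γ * Complex.exp (-c * s) / Complex.sin (π * s / γ) +
        π ^ 2 / γ ^ 2 * Complex.exp (-c * s) * Complex.cos (π * s / γ) /
          Complex.sin (π * s / γ) ^ 2)) s := by
  have h_exp := (((hasDerivAt_id s).const_mul (-c : ℂ)).cexp).const_mul (π / γ : ℂ)
  have h_sin := (((hasDerivAt_id s).const_mul (π : ℂ)).div_const (γ : ℂ)).csin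
  refine (h_exp.div h_sin hsin).congr_deriv ?_
  simp only [id]
  field_simp
  ring

end Logistic

theorem laplace_transform_id_mul_logistic_cdf_general
    (γ c : ℝ) (s : ℂ) (hγ : 0 < γ) (hs : 0 < s.re) (hsγ : s.re < γ) :
    HasBilateralLaplace (fun y ↦ y * (1 / (1 + Complex.exp (-γ * (y - c))))) s
      (π * c / γ * Complex.exp (-c * s) / Complex.sin (π * s / γ) +
        π ^ 2 / γ ^ 2 * Complex.exp (-c * s) * Complex.cos (π * s / γ) /
          Complex.sin (π * s / γ) ^ 2) := by
  have h_strip : ∀ᶠ w : ℂ in 𝓝 s, 0 < w.re ∧ w.re < γ :=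
    Complex.continuous_re.continuousAt.eventually (Ioo_mem_nhds hs hsγ)
  have h_transform := h_strip.mono fun w hw ↦ hasBilateralLaplace_logistic c hγ hw.1 hw.2
  have h_sin : Complex.sin (π * s / γ) ≠ 0 := by
    rw [mul_div_assoc]
    exact sin_pi_mul_ne_zero (mem_integerComplement_of_re_mem_Ioo (div_re_mem_Ioo hγ hs hsγ))
  have h_logistic (y : ℝ) :
      (y : ℂ) * (1 / (1 + Complex.exp (-γ * (y - c)))) = y • (sigmoid (γ * (y - c)) : ℂ) := by
    simp [sigmoid_def]
  simpa only [h_logistic, neg_neg] using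
    HasBilateralLaplace.id_smul h_transform (hasDerivAt_exp_div_sin c h_sin)

/-- Two-sided Laplace transform of `y ↦ y · G(y; γ, c)` where `G` is the logistic
distribution function: for `0 < s < γ`,
`∫ e^{-sy} y / (1 + e^{-γ(y-c)}) dy = (πc/γ) e^{-cs}/sin(πs/γ) + (π²/γ²) e^{-cs} cos(πs/γ)/sin²(πs/γ)`. -/
theorem laplace_transform_id_mul_logistic_cdf
    (γ c s : ℝ) (hγ : 0 < γ) (hs : 0 < s) (hsγ : s < γ) :
    ∫ y : ℝ, Real.exp (-s * y) * y * (1 / (1 + Real.exp (-γ * (y - c)))) =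
      (Real.pi * c / γ) * Real.exp (-c * s) / Real.sin (Real.pi * s / γ) +
        (Real.pi ^ 2 / γ ^ 2) * Real.exp (-c * s) * Real.cos (Real.pi * s / γ) /
          Real.sin (Real.pi * s / γ) ^ 2 := by
  rw [← Complex.ofReal_inj, ← integral_complex_ofReal]
  simpa [mul_assoc] using (laplace_transform_id_mul_logistic_cdf_general γ c s hγ hs hsγ).2
end

section
/- Let σ > 0, γ ≥ 0 be real numbers and let a, c, d ∈ ℝ. If a·σ²·x² + (c·σ²·x² + d)·F(σx, γ) = 0 for every x ∈ ℝ, then a = 0, and moreover either γ = 0 or both c = 0 and d = 0. -/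
/-- The smooth transition function of the STGARCH model:
`F(x, γ) = 1/(1+e^{γx}) - 1/2`. -/
noncomputable def stgarchF (x γ : ℝ) : ℝ := 1 / (1 + Real.exp (γ * x)) - 1 / 2

theorem stgarchF_eq_sigmoid_sub_half (x γ : ℝ) :
    stgarchF x γ = Real.sigmoid (-(γ * x)) - 1 / 2 := by
  rw [stgarchF, Real.sigmoid_def, neg_neg, one_div (1 + _)]

theorem stgarchF_neg (x γ : ℝ) : stgarchF (-x) γ = -stgarchF x γ := by
  rw [stgarchF_eq_sigmoid_sub_half, stgarchF_eq_sigmoid_sub_half, mul_neg, Real.sigmoid_neg]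
  ring

theorem stgarchF_eq_zero_iff {x γ : ℝ} : stgarchF x γ = 0 ↔ γ = 0 ∨ x = 0 := by
  rw [stgarchF_eq_sigmoid_sub_half, sub_eq_zero, one_div, ← Real.sigmoid_zero, Real.sigmoid_inj,
    neg_eq_zero, mul_eq_zero]

theorem eq_zero_and_eq_zero_of_even_add_odd_eq_zero {α β : Type*} [Neg α] [AddCommGroup β]
    [IsAddTorsionFree β] {f g : α → β} (hf : f.Even) (hg : g.Odd) (h : f + g = 0) :
    f = 0 ∧ g = 0 := by
  have hfg : f = -g := eq_neg_of_add_eq_zero_left h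
  have hf_odd : f.Odd := fun x ↦ by simp only [hfg, Pi.neg_apply, hg x]
  have hf_zero : f = 0 := Function.zero_of_even_and_odd hf hf_odd
  exact ⟨hf_zero, by rwa [hf_zero, zero_add] at h⟩

theorem eq_zero_and_eq_zero_of_mul_add_eq_zero {R : Type*} [Ring R] [NoZeroDivisors R]
    {m b u v : R} (huv : u ≠ v) (hu : m * u + b = 0) (hv : m * v + b = 0) : m = 0 ∧ b = 0 := by
  have hmul : m * (u - v) = 0 := by
    rw [mul_sub, sub_eq_zero]
    exact add_right_cancel (hu.trans hv.symm)
  have hm : m = 0 := (mul_eq_zero.mp hmul).resolve_right (sub_ne_zero.mpr huv)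
  exact ⟨hm, by rwa [hm, zero_mul, zero_add] at hu⟩

theorem stgarch_identity_partial_general {σ γ a c d : ℝ} (hσ : σ ≠ 0)
    (h : ∀ x : ℝ, a * σ ^ 2 * x ^ 2 + (c * σ ^ 2 * x ^ 2 + d) * stgarchF (σ * x) γ = 0) :
    a = 0 ∧ (γ = 0 ∨ (c = 0 ∧ d = 0)) := by
  have heven : Function.Even fun x : ℝ ↦ a * σ ^ 2 * x ^ 2 := fun x ↦ by simp only [neg_sq]
  have hodd : Function.Odd fun x : ℝ ↦ (c * σ ^ 2 * x ^ 2 + d) * stgarchF (σ * x) γ := fun x ↦ by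
    simp only [neg_sq, mul_neg, stgarchF_neg]
  obtain ⟨heven_zero, hodd_zero⟩ :=
    eq_zero_and_eq_zero_of_even_add_odd_eq_zero heven hodd (funext h)
  have ha : a = 0 := by simpa [hσ] using congrFun heven_zero 1
  refine ⟨ha, or_iff_not_imp_left.mpr fun hγ ↦ ?_⟩
  have hquad {x : ℝ} (hx : x ≠ 0) : c * σ ^ 2 * x ^ 2 + d = 0 :=
    (mul_eq_zero.mp (congrFun hodd_zero x)).resolve_right fun hF ↦
      (stgarchF_eq_zero_iff.mp hF).elim hγ (mul_ne_zero hσ hx)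
  obtain ⟨hc, hd⟩ := eq_zero_and_eq_zero_of_mul_add_eq_zero (by norm_num : (1 : ℝ) ^ 2 ≠ 2 ^ 2)
    (hquad one_ne_zero) (hquad two_ne_zero)
  exact ⟨(mul_eq_zero.mp hc).resolve_right (pow_ne_zero 2 hσ), hd⟩

/-- If `a σ² x² + (c σ² x² + d) F(σx, γ) = 0` for all real `x`, with `σ > 0` and `γ ≥ 0`,
then `a = 0`, and moreover either `γ = 0` or both `c = 0` and `d = 0`. -/
theorem stgarch_identity_partial
    (σ γ a c d : ℝ) (hσ : 0 < σ) (hγ : 0 ≤ γ)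
    (h : ∀ x : ℝ, a * σ ^ 2 * x ^ 2 + (c * σ ^ 2 * x ^ 2 + d) * stgarchF (σ * x) γ = 0) :
    a = 0 ∧ (γ = 0 ∨ (c = 0 ∧ d = 0)) :=
  stgarch_identity_partial_general hσ.ne' h
end
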